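/- arXiv:1607.05102 — 2 statements merged into one kernel-verified Lean document; each statement's English description precedes it below -/
import Mathlib

section
/- Let 1 < p < n and n − p < λ < n. There exists a constant C = C(n, p, λ, β) > 0 such that for every V ∈ L_{1,λ}^β(ℝⁿ), every x ∈ ℝⁿ and every r > 0, ∫_{{y : |x−y|_β < r}} |V(y)| / |x−y|_β^{(n−p)·2|β|/n} dy ≤ C · r^{(λ−(n−p))·2|β|/n} · ‖V‖_{L_{1,λ}^β}. In particular, every V ∈ L_{1,λ}^β(ℝⁿ) belongs to the Stummel class S_p^β. -/
open MeasureTheory Real Set Filter Topology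

/-- The non-isotropic β-distance of `x` to the origin:
`|x|_β = (∑ k, |x k| ^ (1/β k)) ^ ((β₁+⋯+βₙ)/n)`. -/
noncomputable def betaDist (n : ℕ) (β : Fin n → ℝ) (x : Fin n → ℝ) : ℝ :=
  (∑ k, |x k| ^ (1 / β k)) ^ ((∑ k, β k) / n)

/-- The exponent `(n - p) · 2|β|/n` appearing in the Stummel kernel. -/
noncomputable def bexp (n : ℕ) (β : Fin n → ℝ) (p : ℝ) : ℝ :=
  ((n : ℝ) - p) * (2 * (∑ k, β k) / n)

/-- The Stummel modulus generated by the β-distance: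
`η_β(r) = sup_x ∫_{|x-y|_β < r} |V(y)| / |x-y|_β^{(n-p)·2|β|/n} dy`. -/
noncomputable def stummel (n : ℕ) (β : Fin n → ℝ) (p : ℝ) (V : (Fin n → ℝ) → ℝ) (r : ℝ) : ℝ :=
  ⨆ x : Fin n → ℝ, ∫ y in {y : Fin n → ℝ | betaDist n β (x - y) < r},
    |V y| / betaDist n β (x - y) ^ bexp n β p

lemma core_stummel {α : Type*} [MeasurableSpace α] (μ : Measure α) (d f : α → ℝ)
    (hd : Measurable d) (hd0 : ∀ y, 0 ≤ d y) (hf0 : ∀ y, 0 ≤ f y)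
    (hf : ∀ s > 0, IntegrableOn f {y | d y < s} μ) (a b K : ℝ) (ha : 0 < a) (hab : a < b)
    (hK : 0 ≤ K)
    (H : ∀ s > 0, ∫ y in {y | d y < s}, f y ∂μ ≤ K * s ^ b) (r : ℝ) (hr : 0 < r) :
    ∫ y in {y | d y < r}, f y / d y ^ a ∂μ ≤
      ((2:ℝ) ^ a * (1 - (2:ℝ) ^ (-(b - a)))⁻¹) * r ^ (b - a) * K := by
  have hq0 : (0:ℝ) ≤ (2:ℝ) ^ (-(b - a)) := by positivity
  have hq1 : (2:ℝ) ^ (-(b - a)) < 1 := Real.rpow_lt_one_of_one_lt_of_neg (by norm_num) (by linarith)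
  have hsum := (hasSum_geometric_of_lt_one hq0 hq1).mul_left ((2:ℝ) ^ a * r ^ (b - a) * K)
  have hS : ∀ s : ℝ, MeasurableSet {y | d y < s} := fun s => measurableSet_lt hd measurable_const
  have hs : ∀ j : ℕ, 0 < r * ((1:ℝ) / 2) ^ j := fun j => by positivity
  have hmeas : AEStronglyMeasurable f (μ.restrict {y | d y < r}) := (hf r hr).aestronglyMeasurable
  have hmeas' : AEStronglyMeasurable (fun y => f y / d y ^ a) (μ.restrict {y | d y < r}) := by
    apply AEMeasurable.aestronglyMeasurable
    exact hmeas.aemeasurable.div (hd.pow_const a).aemeasurable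
  rw [integral_eq_lintegral_of_nonneg_ae
    (Filter.Eventually.of_forall fun y => div_nonneg (hf0 y) (Real.rpow_nonneg (hd0 y) a)) hmeas']
  have hpos : 0 ≤ ((2:ℝ) ^ a * (1 - (2:ℝ) ^ (-(b - a)))⁻¹) * r ^ (b - a) * K := by
    have : 0 ≤ (1 - (2:ℝ) ^ (-(b - a)))⁻¹ := inv_nonneg.2 (by linarith)
    positivity
  apply ENNReal.toReal_le_of_le_ofReal hpos
  have key : ∀ j : ℕ, ((r * ((1:ℝ) / 2) ^ (j+1)) ^ a)⁻¹ * (K * (r * ((1:ℝ) / 2) ^ j) ^ b)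
      = (2:ℝ) ^ a * r ^ (b - a) * K * ((2:ℝ) ^ (-(b - a))) ^ j := by
    intro j
    have e1 : ((1:ℝ) / 2) ^ j = (2:ℝ) ^ (-(j:ℝ)) := by
      rw [Real.rpow_neg (by norm_num), Real.rpow_natCast]; simp
    have e2 : ((1:ℝ) / 2) ^ (j + 1) = (2:ℝ) ^ (-((j:ℝ) + 1)) := by
      rw [Real.rpow_neg (by norm_num), ← Nat.cast_succ, Real.rpow_natCast]; simp
    have h2 : (0:ℝ) ≤ 2 := by norm_num
    rw [e1, e2, Real.mul_rpow hr.le (by positivity), Real.mul_rpow hr.le (by positivity),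
      ← Real.rpow_mul h2, ← Real.rpow_mul h2, mul_inv, ← Real.rpow_neg hr.le, ← Real.rpow_neg h2,
      ← Real.rpow_natCast, ← Real.rpow_mul h2, sub_eq_add_neg b a, Real.rpow_add hr]
    have : (2:ℝ) ^ (-(-((j:ℝ) + 1) * a)) * 2 ^ (-(j:ℝ) * b) = 2 ^ a * 2 ^ (-(b + -a) * (j:ℝ)) := by
      rw [← Real.rpow_add (by norm_num), ← Real.rpow_add (by norm_num)]
      congr 1; ring
    linear_combination (r ^ (-a) * r ^ b * K) * this
  have step : ∀ j : ℕ, ∫⁻ y in {y | d y < r}, ({y | d y < r * ((1:ℝ) / 2) ^ j}.indicator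
      (fun y => ENNReal.ofReal (((r * ((1:ℝ) / 2) ^ (j+1)) ^ a)⁻¹) * ENNReal.ofReal (f y)) y) ∂μ ≤
      ENNReal.ofReal ((2:ℝ) ^ a * r ^ (b - a) * K * ((2:ℝ) ^ (-(b - a))) ^ j) := by
    intro j
    refine (setLIntegral_le_lintegral _ _).trans ?_
    rw [lintegral_indicator (hS _), lintegral_const_mul' _ _ ENNReal.ofReal_ne_top,
      ← ofReal_integral_eq_lintegral_ofReal (hf _ (hs j)) (Filter.Eventually.of_forall hf0),
      ← ENNReal.ofReal_mul (by positivity), ← key j]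
    apply ENNReal.ofReal_le_ofReal
    exact mul_le_mul_of_nonneg_left (H _ (hs j)) (by positivity)
  calc ∫⁻ y in {y | d y < r}, ENNReal.ofReal (f y / d y ^ a) ∂μ
      ≤ ∫⁻ y in {y | d y < r}, ∑' j : ℕ, ({y | d y < r * ((1:ℝ) / 2) ^ j}.indicator
      (fun y => ENNReal.ofReal (((r * ((1:ℝ) / 2) ^ (j+1)) ^ a)⁻¹) * ENNReal.ofReal (f y)) y) ∂μ := by
        apply setLIntegral_mono' (hS r)
        intro y hy
        rcases (hd0 y).eq_or_lt with h | h
        · rw [← h, Real.zero_rpow ha.ne']; simp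
        have hy : d y < r := hy
        have hex : ∃ j : ℕ, r * ((1:ℝ) / 2) ^ (j+1) ≤ d y := by
          obtain ⟨m, hm⟩ := exists_pow_lt_of_lt_one (div_pos h hr) (by norm_num : (1:ℝ)/2 < 1)
          refine ⟨m, ?_⟩
          rw [lt_div_iff₀ hr] at hm
          have : 0 < ((1:ℝ)/2)^m * r := by positivity
          rw [pow_succ]; linarith
        obtain ⟨j, hj1, hj2⟩ : ∃ j : ℕ, r * ((1:ℝ) / 2) ^ (j+1) ≤ d y ∧
            d y < r * ((1:ℝ) / 2) ^ j := by
          classical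
          refine ⟨Nat.find hex, Nat.find_spec hex, ?_⟩
          rcases hk : Nat.find hex with _ | k
          · simpa using hy
          · exact not_le.1 (Nat.find_min hex (m := k) (by omega))
        refine le_trans ?_ (ENNReal.le_tsum j)
        rw [Set.indicator_of_mem (by exact hj2), ← ENNReal.ofReal_mul (by positivity)]
        apply ENNReal.ofReal_le_ofReal
        rw [div_eq_inv_mul]
        have h3 := Real.rpow_le_rpow (hs (j+1)).le hj1 ha.le
        have h4 : 0 < (r * ((1:ℝ) / 2) ^ (j+1)) ^ a := Real.rpow_pos_of_pos (hs (j+1)) a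
        exact mul_le_mul_of_nonneg_right (inv_anti₀ h4 h3) (hf0 y)
    _ = ∑' j : ℕ, ∫⁻ y in {y | d y < r}, ({y | d y < r * ((1:ℝ) / 2) ^ j}.indicator
      (fun y => ENNReal.ofReal (((r * ((1:ℝ) / 2) ^ (j+1)) ^ a)⁻¹) * ENNReal.ofReal (f y)) y) ∂μ := by
        apply lintegral_tsum
        intro j
        apply AEMeasurable.indicator _ (hS _)
        exact hmeas.aemeasurable.ennreal_ofReal.const_mul _
    _ ≤ ∑' j : ℕ, ENNReal.ofReal ((2:ℝ) ^ a * r ^ (b - a) * K * ((2:ℝ) ^ (-(b - a))) ^ j) :=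
        ENNReal.tsum_le_tsum step
    _ = _ := by
        rw [← ENNReal.ofReal_tsum_of_nonneg (fun j => by positivity) hsum.summable, hsum.tsum_eq]
        congr 1; ring

lemma betaDist_measurable (n : ℕ) (β : Fin n → ℝ) : Measurable (betaDist n β) := by
  unfold betaDist
  fun_prop

lemma betaDist_nonneg (n : ℕ) (β : Fin n → ℝ) (x : Fin n → ℝ) : 0 ≤ betaDist n β x := by
  unfold betaDist
  positivity

lemma betaBall_subset (n : ℕ) (β : Fin n → ℝ) (hβ : ∀ k, 0 < β k) (hB : 0 < (∑ k, β k) / n)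
    (x : Fin n → ℝ) (r : ℝ) (hr : 0 < r) :
    ∃ T : Set (Fin n → ℝ), IsCompact T ∧ {y : Fin n → ℝ | betaDist n β (x - y) < r} ⊆ T := by
  set R := r ^ ((∑ k, β k) / n)⁻¹ with hR
  refine ⟨Set.Icc (fun k => x k - R ^ β k) (fun k => x k + R ^ β k), isCompact_Icc, ?_⟩
  intro y hy
  have hy : betaDist n β (x - y) < r := hy
  have h0 : 0 ≤ ∑ k, |(x - y) k| ^ (1 / β k) := by positivity
  have h1 : ∑ k, |(x - y) k| ^ (1 / β k) < R := by
    rw [hR, Real.lt_rpow_inv_iff_of_pos h0 hr.le hB]; exact hy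
  have h2 : ∀ k, |x k - y k| ≤ R ^ β k := by
    intro k
    have h3 : |(x - y) k| ^ (1 / β k) ≤ R :=
      (Finset.single_le_sum (f := fun k => |(x - y) k| ^ (1 / β k))
        (fun i _ => by positivity) (Finset.mem_univ k)).trans h1.le
    rw [one_div, Real.rpow_inv_le_iff_of_pos (abs_nonneg _) (by positivity) (hβ k)] at h3
    exact h3
  constructor <;> intro k <;> have := abs_le.1 (h2 k) <;> simp only <;> linarith

/-- if `V` lies in the non-isotropic Morrey space `L_{1,λ}^β` (with any bound `K`
for its Morrey norm), then the Stummel-kernel integrals are controlled by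
`C · r^{(λ-(n-p))·2|β|/n} · K`; in particular `V` lies in the Stummel class `S_p^β`
(the Stummel modulus is finite and tends to `0` as `r → 0⁺`). -/
theorem morrey_subset_stummel
    (n : ℕ) (hn : 1 ≤ n) (β : Fin n → ℝ) (hβ : ∀ k, (1:ℝ)/2 ≤ β k)
    (p lam : ℝ) (hp1 : 1 < p) (hpn : p < n) (hlam1 : (n:ℝ) - p < lam) (hlam2 : lam < n) :
    ∃ C > 0, ∀ V : (Fin n → ℝ) → ℝ, LocallyIntegrable V volume →
      ∀ K : ℝ,
        (∀ x : Fin n → ℝ, ∀ r > 0,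
          (∫ y in {y : Fin n → ℝ | betaDist n β (x - y) < r}, |V y|) ≤
            K * r ^ (lam * (2 * (∑ k, β k) / n))) →
        (∀ x : Fin n → ℝ, ∀ r > 0,
            (∫ y in {y : Fin n → ℝ | betaDist n β (x - y) < r},
                |V y| / betaDist n β (x - y) ^ bexp n β p) ≤
              C * r ^ ((lam - ((n:ℝ) - p)) * (2 * (∑ k, β k) / n)) * K) ∧
        (∀ r > 0, BddAbove (Set.range fun x : Fin n → ℝ =>
            ∫ y in {y : Fin n → ℝ | betaDist n β (x - y) < r},
              |V y| / betaDist n β (x - y) ^ bexp n β p)) ∧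
        Tendsto (stummel n β p V) (𝓝[>] (0:ℝ)) (𝓝 0) := by
  have hβ0 : ∀ k, 0 < β k := fun k => lt_of_lt_of_le (by norm_num) (hβ k)
  have hn0 : (0:ℝ) < n := by exact_mod_cast hn
  have hB : 0 < ∑ k, β k := by
    have : Nonempty (Fin n) := ⟨⟨0, hn⟩⟩
    exact Finset.sum_pos (fun k _ => hβ0 k) Finset.univ_nonempty
  set c := 2 * (∑ k, β k) / n with hc
  have hc0 : 0 < c := by positivity
  have ha : 0 < bexp n β p := mul_pos (by linarith) hc0
  have hab : bexp n β p < lam * c := mul_lt_mul_of_pos_right hlam1 hc0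
  have hexp : lam * c - bexp n β p = (lam - ((n:ℝ) - p)) * c := by
    simp only [bexp, ← hc]; ring
  have hq1 : (2:ℝ) ^ (-(lam * c - bexp n β p)) < 1 :=
    Real.rpow_lt_one_of_one_lt_of_neg (by norm_num) (by linarith)
  refine ⟨(2:ℝ) ^ (bexp n β p) * (1 - (2:ℝ) ^ (-(lam * c - bexp n β p)))⁻¹,
    mul_pos (by positivity) (inv_pos.2 (by linarith)), ?_⟩
  intro V hV K H
  have hK : 0 ≤ K := by
    have h := H 0 1 one_pos
    rw [Real.one_rpow, mul_one] at h
    exact (integral_nonneg fun y => abs_nonneg _).trans h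
  have main : ∀ x : Fin n → ℝ, ∀ r > 0,
      (∫ y in {y : Fin n → ℝ | betaDist n β (x - y) < r},
          |V y| / betaDist n β (x - y) ^ bexp n β p) ≤
        ((2:ℝ) ^ (bexp n β p) * (1 - (2:ℝ) ^ (-(lam * c - bexp n β p)))⁻¹)
          * r ^ ((lam - ((n:ℝ) - p)) * c) * K := by
    intro x r hr
    rw [← hexp]
    refine core_stummel volume (fun y => betaDist n β (x - y)) (fun y => |V y|)
      ((betaDist_measurable n β).comp (measurable_const.sub measurable_id))
      (fun y => betaDist_nonneg _ _ _) (fun y => abs_nonneg _) ?_ _ _ K ha hab hK (H x) r hr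
    intro s hs
    obtain ⟨T, hT, hsub⟩ := betaBall_subset n β hβ0 (by positivity) x s hs
    exact ((hV.integrableOn_isCompact hT).mono_set hsub).abs
  refine ⟨main, ?_, ?_⟩
  · intro r hr
    refine ⟨((2:ℝ) ^ (bexp n β p) * (1 - (2:ℝ) ^ (-(lam * c - bexp n β p)))⁻¹)
          * r ^ ((lam - ((n:ℝ) - p)) * c) * K, ?_⟩
    rintro _ ⟨x, rfl⟩
    exact main x r hr
  · set C := (2:ℝ) ^ (bexp n β p) * (1 - (2:ℝ) ^ (-(lam * c - bexp n β p)))⁻¹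
    have he : 0 < (lam - ((n:ℝ) - p)) * c := mul_pos (by linarith) hc0
    have hlim : Tendsto (fun r : ℝ => C * r ^ ((lam - ((n:ℝ) - p)) * c) * K) (𝓝[>] (0:ℝ)) (𝓝 0) := by
      have h1 : Tendsto (fun r : ℝ => r ^ ((lam - ((n:ℝ) - p)) * c)) (𝓝 (0:ℝ)) (𝓝 0) := by
        have := (Real.continuousAt_rpow_const (0:ℝ) _ (Or.inr he.le)).tendsto
        rwa [Real.zero_rpow he.ne'] at this
      have h2 : Tendsto (fun r : ℝ => r ^ ((lam - ((n:ℝ) - p)) * c)) (𝓝[>] (0:ℝ)) (𝓝 0) :=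
        h1.mono_left nhdsWithin_le_nhds
      have := (h2.const_mul C).mul_const K
      simpa using this
    refine tendsto_of_tendsto_of_tendsto_of_le_of_le' tendsto_const_nhds hlim ?_ ?_
    · refine Filter.Eventually.of_forall fun r => ?_
      exact Real.iSup_nonneg fun x => integral_nonneg fun y =>
        div_nonneg (abs_nonneg _) (Real.rpow_nonneg (betaDist_nonneg _ _ _) _)
    · filter_upwards [self_mem_nhdsWithin] with r hr
      exact ciSup_le fun x => main x r hr
end

section
/- Let n ≥ 3, δ := e^{−3}, and f(x) := χ_{B_β(0,δ)}(x) / ( |x|_β² · |log |x|_β|⁶ ). Then for every λ > n − 2, sup_{r > 0} r^{−λ} ∫_{{y : |y|_β < r}} f(y) dy = +∞; that is, f does not belong to the non-isotropic Morrey space defined by the finiteness of sup_{x∈ℝⁿ, r>0} r^{−λ} ∫_{{y : |x−y|_β < r}} |f(y)| dy for any λ > n − 2. -/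
open MeasureTheory Real Set Filter Topology

/-- The example function `f(x) = χ_{B_β(0,e⁻³)}(x) / (|x|_β² |log |x|_β|⁶)`. -/
noncomputable def fex (n : ℕ) (β : Fin n → ℝ) (x : Fin n → ℝ) : ℝ :=
  Set.indicator {z : Fin n → ℝ | betaDist n β z < Real.exp (-3)}
    (fun z => 1 / (betaDist n β z ^ (2:ℝ) * |Real.log (betaDist n β z)| ^ (6:ℝ))) x

lemma oneDim_integrable (s : ℝ) (hs : -1 < s) :
    Integrable (fun t : ℝ => (Ioo (0:ℝ) 1).indicator (fun t => t ^ s) t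
      + (Ioo (0:ℝ) 1).indicator (fun t => t ^ s) (-t)) := by
  have h : Integrable ((Ioo (0:ℝ) 1).indicator (fun t : ℝ => t ^ s)) := by
    rw [integrable_indicator_iff measurableSet_Ioo]
    exact (intervalIntegral.integrableOn_Ioo_rpow_iff one_pos).2 hs
  exact h.add h.comp_neg

lemma oneDim_eq (s t : ℝ) (h0 : t ≠ 0) (h1 : |t| < 1) :
    (Ioo (0:ℝ) 1).indicator (fun t => t ^ s) t
      + (Ioo (0:ℝ) 1).indicator (fun t => t ^ s) (-t) = |t| ^ s := by
  rcases lt_or_gt_of_ne h0 with h | h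
  · rw [abs_of_neg h] at h1 ⊢
    rw [indicator_of_notMem, indicator_of_mem, zero_add]
    · exact ⟨by linarith, h1⟩
    · intro h2; linarith [h2.1]
  · rw [abs_of_pos h] at h1 ⊢
    rw [indicator_of_mem, indicator_of_notMem, add_zero]
    · intro h2; linarith [h2.1]
    · exact ⟨h, h1⟩

lemma oneDim_nonneg (s t : ℝ) :
    0 ≤ (Ioo (0:ℝ) 1).indicator (fun t => t ^ s) t
      + (Ioo (0:ℝ) 1).indicator (fun t => t ^ s) (-t) := by
  apply add_nonneg <;>
  exact indicator_nonneg (fun x hx => rpow_nonneg hx.1.le _) _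

lemma fex_measurable (n : ℕ) (β : Fin n → ℝ) : Measurable (fex n β) := by
  have h := betaDist_measurable n β
  unfold fex
  refine Measurable.indicator ?_ (measurableSet_lt h measurable_const)
  have h2 : Measurable (fun z => |Real.log (betaDist n β z)|) := by
    simpa only [Real.norm_eq_abs, Function.comp_apply] using (Real.measurable_log.comp h).norm
  exact measurable_const.div ((h.pow_const _).mul (h2.pow_const _))

lemma fex_nonneg (n : ℕ) (β : Fin n → ℝ) (x : Fin n → ℝ) : 0 ≤ fex n β x := by
  unfold fex
  refine indicator_nonneg (fun z _ => ?_) _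
  have := betaDist_nonneg n β z
  positivity

lemma le_betaSum (n : ℕ) (β : Fin n → ℝ) (x : Fin n → ℝ) (k : Fin n) :
    |x k| ^ (1 / β k) ≤ ∑ k, |x k| ^ (1 / β k) :=
  Finset.single_le_sum (f := fun k => |x k| ^ (1 / β k))
    (fun _ _ => rpow_nonneg (abs_nonneg _) _) (Finset.mem_univ k)

lemma coord_le (n : ℕ) (β : Fin n → ℝ) (hβ : ∀ k, (1:ℝ)/2 ≤ β k) (x : Fin n → ℝ) (k : Fin n) :
    |x k| ≤ (∑ k, |x k| ^ (1 / β k)) ^ β k := by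
  have hb : 0 < β k := by linarith [hβ k]
  calc |x k| = (|x k| ^ (1 / β k)) ^ β k := by
        rw [← rpow_mul (abs_nonneg _), one_div, inv_mul_cancel₀ hb.ne', rpow_one]
    _ ≤ _ := rpow_le_rpow (rpow_nonneg (abs_nonneg _) _) (le_betaSum n β x k) hb.le

lemma sum_pos_beta (n : ℕ) (hn : 3 ≤ n) (β : Fin n → ℝ) (hβ : ∀ k, (1:ℝ)/2 ≤ β k) :
    0 < ∑ k, β k := by
  apply Finset.sum_pos
  · intro k _; linarith [hβ k]
  · exact ⟨⟨0, by omega⟩, Finset.mem_univ _⟩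

lemma betaDist_pos (n : ℕ) (hn : 3 ≤ n) (β : Fin n → ℝ) (x : Fin n → ℝ)
    (hx : ∀ k, x k ≠ 0) : 0 < betaDist n β x := by
  have k0 : Fin n := ⟨0, by omega⟩
  exact rpow_pos_of_pos ((rpow_pos_of_pos (abs_pos.2 (hx k0)) _).trans_le (le_betaSum n β x k0)) _

lemma prod_le (n : ℕ) (hn : 3 ≤ n) (β : Fin n → ℝ) (hβ : ∀ k, (1:ℝ)/2 ≤ β k) (x : Fin n → ℝ) :
    ∏ k, |x k| ≤ betaDist n β x ^ (n:ℝ) := by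
  have hn0 : (n:ℝ) ≠ 0 := by positivity
  have hS : 0 ≤ ∑ k, |x k| ^ (1 / β k) := Finset.sum_nonneg fun _ _ => rpow_nonneg (abs_nonneg _) _
  unfold betaDist
  rw [← rpow_mul hS, div_mul_cancel₀ _ hn0,
    rpow_sum_of_nonneg hS (fun k _ => by linarith [hβ k])]
  exact Finset.prod_le_prod (fun _ _ => abs_nonneg _) (fun k _ => coord_le n β hβ x k)

lemma coord_lt_one (n : ℕ) (hn : 3 ≤ n) (β : Fin n → ℝ) (hβ : ∀ k, (1:ℝ)/2 ≤ β k)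
    (x : Fin n → ℝ) (h : betaDist n β x < 1) (k : Fin n) : |x k| < 1 := by
  by_contra! hk
  have hb : 0 < β k := by linarith [hβ k]
  have h1 : (1:ℝ) ≤ |x k| ^ (1 / β k) := one_le_rpow hk (by positivity)
  have h2 := h1.trans (le_betaSum n β x k)
  have h3 : 1 ≤ betaDist n β x :=
    one_le_rpow h2 (div_nonneg (sum_pos_beta n hn β hβ).le (Nat.cast_nonneg _))
  linarith

lemma fex_integrable (n : ℕ) (hn : 3 ≤ n) (β : Fin n → ℝ) (hβ : ∀ k, (1:ℝ)/2 ≤ β k) :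
    Integrable (fex n β) := by
  have hn3 : (3:ℝ) ≤ n := by exact_mod_cast hn
  have hs : (-1:ℝ) < -2 / n := by
    rw [lt_div_iff₀ (by linarith)]; linarith
  have hG := Integrable.fintype_prod (ι := Fin n) (μ := fun _ => (volume : Measure ℝ))
    (f := fun _ => fun t : ℝ => (Ioo (0:ℝ) 1).indicator (fun t => t ^ (-2 / n : ℝ)) t
      + (Ioo (0:ℝ) 1).indicator (fun t => t ^ (-2 / n : ℝ)) (-t))
    (fun _ => oneDim_integrable _ hs)
  refine Integrable.mono' hG (fex_measurable n β).aestronglyMeasurable ?_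
  have hae : ∀ᵐ x : Fin n → ℝ, ∀ k, x k ≠ 0 := by
    rw [ae_all_iff]
    intro k
    exact Measure.ae_eval_ne (μ := fun _ => (volume : Measure ℝ)) k 0
  filter_upwards [hae] with x hx
  rw [Real.norm_of_nonneg (fex_nonneg n β x)]
  by_cases hd : betaDist n β x < Real.exp (-3)
  · have hd1 : betaDist n β x < 1 := hd.trans (by simp)
    have hpos := betaDist_pos n hn β x hx
    have hc := coord_lt_one n hn β hβ x hd1
    rw [Finset.prod_congr rfl (fun k _ => oneDim_eq (-2 / n : ℝ) (x k) (hx k) (hc k))]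
    rw [Real.finsetProd_rpow _ _ (fun k _ => abs_nonneg _)]
    unfold fex
    rw [indicator_of_mem (by exact hd)]
    have hlog : Real.log (betaDist n β x) < -3 := by
      rw [Real.log_lt_iff_lt_exp hpos]; exact hd
    have hl : (1:ℝ) ≤ |Real.log (betaDist n β x)| ^ (6:ℝ) := by
      apply one_le_rpow _ (by norm_num)
      rw [abs_of_neg (by linarith)]; linarith
    have hd2 : 0 < betaDist n β x ^ (2:ℝ) := rpow_pos_of_pos hpos _
    have hprod : 0 < ∏ k, |x k| := Finset.prod_pos fun k _ => abs_pos.2 (hx k)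
    calc 1 / (betaDist n β x ^ (2:ℝ) * |Real.log (betaDist n β x)| ^ (6:ℝ))
        ≤ 1 / betaDist n β x ^ (2:ℝ) := by
          apply one_div_le_one_div_of_le hd2
          exact le_mul_of_one_le_right hd2.le hl
      _ = (betaDist n β x ^ (n:ℝ)) ^ (-2 / n : ℝ) := by
          rw [← rpow_mul hpos.le, mul_div_cancel₀ _ (by linarith), rpow_neg hpos.le, one_div]
      _ ≤ (∏ k, |x k|) ^ (-2 / n : ℝ) := by
          apply rpow_le_rpow_of_nonpos hprod (prod_le n hn β hβ x)
          exact div_nonpos_of_nonpos_of_nonneg (by norm_num) (by linarith)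
  · unfold fex
    rw [indicator_of_notMem (by exact hd)]
    exact Finset.prod_nonneg fun k _ => oneDim_nonneg _ _

/-- pointwise lower bound, with `6 t < 2` -/
lemma fex_lower (n : ℕ) (β : Fin n → ℝ) (t : ℝ) (ht : 0 < t) (ht2 : 6 * t ≤ 2)
    (r : ℝ) (hr : r ≤ Real.exp (-3)) (x : Fin n → ℝ)
    (hpos : 0 < betaDist n β x) (hlt : betaDist n β x < r) :
    t ^ (6:ℝ) * r ^ (6 * t - 2) ≤ fex n β x := by
  unfold fex
  have hd : betaDist n β x < Real.exp (-3) := hlt.trans_le hr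
  rw [indicator_of_mem (by exact hd)]
  generalize betaDist n β x = d at *
  have hd1 : d < 1 := hd.trans (by simp)
  have hL := abs_log_mul_self_rpow_lt d t hpos hd1.le ht
  have hlog : Real.log d < -3 := by
    rw [Real.log_lt_iff_lt_exp hpos]; exact hd
  have hlp : 0 < |Real.log d| := abs_pos.2 (by linarith)
  have hdt : 0 < d ^ t := rpow_pos_of_pos hpos _
  rw [abs_mul, abs_of_pos hdt, lt_div_iff₀ ht] at hL
  have h6 : (|Real.log d| * d ^ t * t) ^ (6:ℝ) ≤ 1 :=
    rpow_le_one (by positivity) hL.le (by norm_num)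
  rw [mul_rpow (by positivity) ht.le, mul_rpow hlp.le hdt.le, ← rpow_mul hpos.le] at h6
  have hmono : r ^ (6 * t - 2) ≤ d ^ (6 * t - 2) :=
    rpow_le_rpow_of_nonpos hpos hlt.le (by linarith)
  have hd2 : 0 < d ^ (2:ℝ) := rpow_pos_of_pos hpos _
  rw [le_div_iff₀ (mul_pos hd2 (rpow_pos_of_pos hlp _))]
  calc t ^ (6:ℝ) * r ^ (6 * t - 2) * (d ^ (2:ℝ) * |Real.log d| ^ (6:ℝ))
      ≤ t ^ (6:ℝ) * d ^ (6 * t - 2) * (d ^ (2:ℝ) * |Real.log d| ^ (6:ℝ)) := by gcongr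
    _ = |Real.log d| ^ (6:ℝ) * d ^ (t * 6) * t ^ (6:ℝ) := by
        have : d ^ (t * 6) = d ^ (6 * t - 2) * d ^ (2:ℝ) := by
          rw [← rpow_add hpos]; congr 1; ring
        rw [this]; ring
    _ ≤ 1 := h6

lemma integral_lower (n : ℕ) (hn : 3 ≤ n) (β : Fin n → ℝ) (hβ : ∀ k, (1:ℝ)/2 ≤ β k)
    (t : ℝ) (ht : 0 < t) (ht2 : 6 * t ≤ 2)
    (r : ℝ) (hr0 : 0 < r) (hr : r ≤ Real.exp (-3)) :
    t ^ (6:ℝ) * r ^ (6 * t - 2) * (r ^ (n:ℝ) / (n:ℝ) ^ (∑ k, β k))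
      ≤ ∫ y in {y : Fin n → ℝ | betaDist n β y < r}, fex n β y := by
  have hb := sum_pos_beta n hn β hβ
  have hn0 : (0:ℝ) < n := by positivity
  obtain ⟨u, hu⟩ : ∃ u, u = r ^ ((n:ℝ) / ∑ k, β k) / n := ⟨_, rfl⟩
  have hu0 : 0 < u := by rw [hu]; positivity
  have hnu : n * u = r ^ ((n:ℝ) / ∑ k, β k) := by rw [hu]; field_simp
  have hnur : (n * u) ^ ((∑ k, β k) / n) = r := by
    rw [hnu, ← rpow_mul hr0.le, div_mul_div_cancel₀ hb.ne', div_self hn0.ne', rpow_one]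
  have hub : u ^ (∑ k, β k) = r ^ (n:ℝ) / (n:ℝ) ^ (∑ k, β k) := by
    rw [hu, div_rpow (by positivity) hn0.le, ← rpow_mul hr0.le, div_mul_cancel₀ _ hb.ne']
  let A : Set (Fin n → ℝ) := pi univ fun k => Ioo 0 (u ^ β k)
  have hA : MeasurableSet A := MeasurableSet.univ_pi fun k => measurableSet_Ioo
  have hvol : volume.real A = r ^ (n:ℝ) / (n:ℝ) ^ (∑ k, β k) := by
    have := Real.volume_pi_Ioo_toReal (a := fun _ : Fin n => (0:ℝ)) (b := fun k => u ^ β k)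
      (fun k => rpow_nonneg hu0.le _)
    rw [Measure.real, this, ← hub, rpow_sum_of_pos hu0]
    simp
  have hfin : volume A ≠ ⊤ := by
    simp only [A, Real.volume_pi_Ioo]
    exact ENNReal.prod_ne_top fun _ _ => ENNReal.ofReal_ne_top
  have hApos : ∀ x ∈ A, 0 < betaDist n β x := fun x hx =>
    betaDist_pos n hn β x fun k => (hx k (mem_univ k)).1.ne'
  have hAlt : ∀ x ∈ A, betaDist n β x < r := by
    intro x hx
    rw [← hnur]
    unfold betaDist
    refine rpow_lt_rpow (Finset.sum_nonneg fun _ _ => rpow_nonneg (abs_nonneg _) _) ?_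
      (by positivity)
    have : ∑ k : Fin n, |x k| ^ (1 / β k) < ∑ k : Fin n, u := by
      apply Finset.sum_lt_sum_of_nonempty ⟨⟨0, by omega⟩, Finset.mem_univ _⟩
      intro k _
      have hk : 0 < β k := by linarith [hβ k]
      have h := hx k (mem_univ k)
      rw [abs_of_pos h.1]
      calc x k ^ (1 / β k) < (u ^ β k) ^ (1 / β k) :=
            rpow_lt_rpow h.1.le h.2 (by positivity)
        _ = u := by rw [← rpow_mul hu0.le, mul_one_div_cancel hk.ne', rpow_one]
    simpa using this
  have hint := fex_integrable n hn β hβ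
  calc _ = t ^ (6:ℝ) * r ^ (6 * t - 2) * volume.real A := by rw [hvol]
    _ ≤ ∫ y in A, fex n β y :=
        setIntegral_ge_of_const_le_real hA hfin
          (fun x hx => fex_lower n β t ht ht2 r hr x (hApos x hx) (hAlt x hx)) hint.integrableOn
    _ ≤ _ := setIntegral_mono_set hint.integrableOn
        (Eventually.of_forall fun x => fex_nonneg n β x)
        (HasSubset.Subset.eventuallyLE hAlt)

/-- the example function does not belong to the non-isotropic Morrey
space for any `λ > n - 2`: the quantity `r^{-λ} ∫_{|y|_β<r} f(y) dy` is unbounded. -/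
theorem example_function_not_in_morrey
    (n : ℕ) (hn : 3 ≤ n) (β : Fin n → ℝ) (hβ : ∀ k, (1:ℝ)/2 ≤ β k) :
    ∀ lam : ℝ, (n:ℝ) - 2 < lam → ∀ M : ℝ, ∃ r > 0,
      M < r ^ (-lam) * ∫ y in {y : Fin n → ℝ | betaDist n β y < r}, fex n β y := by
  intro lam hlam M
  have hn0 : (0:ℝ) < n := by positivity
  obtain ⟨t, ht, ht2, ht3⟩ : ∃ t : ℝ, 0 < t ∧ 6 * t ≤ 2 ∧ 6 * t < lam - (n - 2) := by
    refine ⟨min 1 ((lam - (n - 2)) / 2) / 6, ?_, ?_, ?_⟩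
    · have : 0 < min 1 ((lam - (n - 2)) / 2) := lt_min one_pos (by linarith)
      positivity
    · linarith [min_le_left 1 ((lam - (n - 2)) / 2)]
    · linarith [min_le_right 1 ((lam - (n - 2)) / 2)]
  have hC : 0 < t ^ (6:ℝ) / (n:ℝ) ^ (∑ k, β k) := by positivity
  have hlim := (tendsto_rpow_neg_nhdsGT_zero
    (show 6 * t - 2 + n - lam < 0 by linarith)).const_mul_atTop hC
  have hev : ∀ᶠ r : ℝ in 𝓝[>] 0, r < Real.exp (-3) :=
    (eventually_lt_nhds (Real.exp_pos _)).filter_mono nhdsWithin_le_nhds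
  obtain ⟨r, hM, hr, hr0⟩ :=
    ((hlim.eventually_gt_atTop M).and (hev.and self_mem_nhdsWithin)).exists
  have hr0 : 0 < r := hr0
  refine ⟨r, hr0, hM.trans_le ?_⟩
  have hI := integral_lower n hn β hβ t ht ht2 r hr0 hr.le
  refine le_trans (le_of_eq ?_) (mul_le_mul_of_nonneg_left hI (rpow_nonneg hr0.le (-lam)))
  rw [show 6 * t - 2 + n - lam = -lam + ((6 * t - 2) + n) by ring, rpow_add hr0, rpow_add hr0]
  ring
end
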